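/- The number of nilpotent n × n matrices over the finite field F_q of rank n − k − 1 equals q^{binom(n−k−1, 2)} · (q−1)^{n−k−1} · [n]!_q / [k+1]!_q · [n−1 choose k]_q, for 0 ≤ k ≤ n − 1. -/

import Mathlib

/-!
Write `N(n, r)` for the number of nilpotent `n × n` matrices of rank `r` over a field with `q`
elements. The formula follows from a two-term recursion for `N`, obtained by counting in two ways
the pairs `(M, v)` with `M` nilpotent of rank `r + 1` and size `n + 1`, and `v ≠ 0` in its kernel.

* Each `M` has `q ^ (n - r) - 1` nonzero kernel vectors (`card_kernel_ne_zero`).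
* Conjugation by `GL` preserves nilpotency and rank and is transitive on nonzero vectors, so each
  of the `q ^ (n + 1) - 1` vectors `v` is killed by equally many `M` (`card_kills_eq`), and `v` may
  be taken to be a standard basis vector.
* A matrix whose first column vanishes is `[0, a; 0, M']`. It is nilpotent iff `M'` is, and its
  rank is that of `M'` or one more, according to whether `a` lies in the row space of `M'`, which
  has `q ^ rank M'` elements (`card_border`).

Hence (`nilCount_recursion`)
`(q^(n-r) - 1) N(n+1, r+1) = (q^(n+1) - 1) (q^(r+1) N(n, r+1) + (q^n - q^r) N(n, r))`.
After cancelling the products of `q`-integers this becomes the Pascal rule `qbinom_pascal` (the one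
with the power of `q` on the other term than in the definition of `qbinom`). The boundary values
are `N(n, 0) = 1` and `N(n, n) = 0` for `n > 0`.
-/

open Finset Polynomial

/-- The Gaussian binomial coefficient `[n choose k]_q` as a polynomial in `q`. -/
noncomputable def qbinom : ℕ → ℕ → Polynomial ℤ
  | _, 0 => 1
  | 0, _ + 1 => 0
  | n + 1, k + 1 => qbinom n k + Polynomial.X ^ (k + 1) * qbinom n (k + 1)

/-! ### Counting nilpotent matrices: invariance and boundary values -/

/-- The number of nilpotent square matrices of rank `r` over `F` with rows and columns indexed by
`ι`. A general index type allows adding a row and a column by passing from `ι` to `Unit ⊕ ι`. -/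
noncomputable def nilCount (F ι : Type) [Field F] [Fintype ι] [DecidableEq ι] (r : ℕ) : ℕ :=
  Nat.card {M : Matrix ι ι F // IsNilpotent M ∧ M.rank = r}

section
variable {F ι κ : Type} [Field F] [Fintype ι] [DecidableEq ι] [Fintype κ] [DecidableEq κ]

lemma nilCount_congr (e : ι ≃ κ) (r : ℕ) : nilCount F ι r = nilCount F κ r := by
  refine Nat.card_congr ((Matrix.reindexAlgEquiv F F e).toEquiv.subtypeEquiv fun M => ?_)
  have h1 : IsNilpotent (Matrix.reindexAlgEquiv F F e M) ↔ IsNilpotent M :=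
    IsNilpotent.map_iff (Matrix.reindexAlgEquiv F F e).injective
  have h2 : (Matrix.reindexAlgEquiv F F e M).rank = M.rank := by
    simp [Matrix.coe_reindexAlgEquiv]
  change _ ↔ IsNilpotent (Matrix.reindexAlgEquiv F F e M) ∧
    (Matrix.reindexAlgEquiv F F e M).rank = r
  rw [h1, h2]

lemma matrix_isNilpotent_iff (M : Matrix ι ι F) : IsNilpotent M ↔ M ^ Fintype.card ι = 0 := by
  refine ⟨fun h => ?_, fun h => ⟨_, h⟩⟩
  have h1 : M.charpoly = X ^ Fintype.card ι :=
    sub_eq_zero.mp (Matrix.isNilpotent_charpoly_sub_pow_of_isNilpotent h).eq_zero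
  simpa [h1] using Matrix.aeval_self_charpoly M

lemma rank_eq_zero_iff_eq_zero (M : Matrix ι ι F) : M.rank = 0 ↔ M = 0 := by
  refine ⟨fun h => ?_, fun h => by simp [h]⟩
  rw [Matrix.rank, Submodule.finrank_eq_zero, LinearMap.range_eq_bot] at h
  refine Matrix.ext_of_mulVec_single fun i => ?_
  rw [← Matrix.mulVecLin_apply, h, LinearMap.zero_apply, Matrix.zero_mulVec]

lemma nilCount_zero : nilCount F ι 0 = 1 := by
  rw [nilCount, Nat.card_eq_one_iff_unique]
  refine ⟨⟨fun a b => Subtype.ext ?_⟩, ⟨0, IsNilpotent.zero, by simp⟩⟩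
  rw [(rank_eq_zero_iff_eq_zero _).mp a.2.2, (rank_eq_zero_iff_eq_zero _).mp b.2.2]

lemma nilCount_card [Nonempty ι] : nilCount F ι (Fintype.card ι) = 0 := by
  rw [nilCount, Nat.card_eq_zero]
  left
  refine ⟨fun ⟨M, hn, hr⟩ => ?_⟩
  have hd : M.det = 0 := by
    obtain ⟨k, hk⟩ := hn
    have : M.det ^ k = 0 := by rw [← Matrix.det_pow, hk, Matrix.det_zero]
    exact eq_zero_of_pow_eq_zero this
  obtain ⟨v, hv, hMv⟩ := Matrix.exists_mulVec_eq_zero_iff.mpr hd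
  have h1 := M.mulVecLin.finrank_range_add_finrank_ker
  rw [Matrix.rank] at hr
  rw [hr, Module.finrank_fintype_fun_eq_card, Nat.add_eq_left, Submodule.finrank_eq_zero] at h1
  exact hv ((Submodule.eq_bot_iff _).mp h1 v (by simpa using hMv))

/-! ### Double counting pairs of a matrix and a kernel vector -/

variable [Fintype F]

omit [DecidableEq ι] in
lemma card_kernel_ne_zero (M : Matrix ι ι F) :
    (Nat.card {v : ι → F // v ≠ 0 ∧ M.mulVec v = 0} : ℚ) =
      (Fintype.card F : ℚ) ^ (Fintype.card ι - M.rank) - 1 := by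
  classical
  have h1 := M.mulVecLin.finrank_range_add_finrank_ker
  rw [Module.finrank_fintype_fun_eq_card, ← Matrix.rank] at h1
  have h2 : Nat.card (LinearMap.ker M.mulVecLin) =
      Nat.card F ^ (Fintype.card ι - M.rank) := by
    rw [Module.natCard_eq_pow_finrank (K := F)]
    congr 1; omega
  have e : {v : ι → F // v ≠ 0 ∧ M.mulVec v = 0} ≃ {v : LinearMap.ker M.mulVecLin // v ≠ 0} :=
    { toFun := fun v => ⟨⟨v.1, v.2.2⟩, fun h => v.2.1 (congrArg Subtype.val h)⟩
      invFun := fun v => ⟨v.1.1, fun h => v.2 (Subtype.ext h), v.1.2⟩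
      left_inv := fun _ => rfl
      right_inv := fun _ => rfl }
  have h3 := Nat.card_congr (Equiv.sumCompl (fun v : LinearMap.ker M.mulVecLin => v = 0))
  rw [Nat.card_sum, h2, Nat.card_unique, ← Nat.card_congr e] at h3
  rw [← Nat.card_eq_fintype_card (α := F), ← Nat.cast_pow, ← h3]
  push_cast; ring

omit [Fintype F] in
lemma exists_linearEquiv_apply_eq {V : Type} [AddCommGroup V] [Module F V] {v w : V}
    (hv : v ≠ 0) (hw : w ≠ 0) : ∃ g : V ≃ₗ[F] V, g v = w := by
  obtain ⟨g, hg⟩ := Submodule.exists_linearEquiv_restrict_eq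
    ((LinearEquiv.toSpanNonzeroSingleton F V v hv).symm ≪≫ₗ
      LinearEquiv.toSpanNonzeroSingleton F V w hw)
  refine ⟨g, ?_⟩
  have := hg ⟨v, Submodule.mem_span_singleton_self v⟩
  rw [← this]
  have h1 : (LinearEquiv.toSpanNonzeroSingleton F V v hv).symm
      ⟨v, Submodule.mem_span_singleton_self v⟩ = 1 := LinearEquiv.coord_self F V v hv
  simp [h1]

omit [Fintype F] in
/-- Conjugation by an invertible map taking `v` to `w` matches the nilpotent matrices of rank `r`
killing `v` with those killing `w`. -/
lemma card_kills_eq {v w : ι → F} (hv : v ≠ 0) (hw : w ≠ 0) (r : ℕ) :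
    Nat.card {M : Matrix ι ι F // (IsNilpotent M ∧ M.rank = r) ∧ M.mulVec v = 0} =
    Nat.card {M : Matrix ι ι F // (IsNilpotent M ∧ M.rank = r) ∧ M.mulVec w = 0} := by
  obtain ⟨g, hg⟩ := exists_linearEquiv_apply_eq (F := F) hv hw
  let φ : Matrix ι ι F ≃ₐ[F] Matrix ι ι F :=
    Matrix.toLinAlgEquiv'.trans ((LinearEquiv.conjAlgEquiv F g).trans LinearMap.toMatrixAlgEquiv')
  have hφ (M : Matrix ι ι F) : (φ M).mulVecLin = (g.toLinearMap ∘ₗ M.mulVecLin) ∘ₗ g.symm := by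
    exact Matrix.toLin'_toMatrix' ((g.toLinearMap ∘ₗ M.mulVecLin) ∘ₗ g.symm.toLinearMap)
  refine Nat.card_congr (φ.toEquiv.subtypeEquiv fun M => ?_)
  have h1 : IsNilpotent (φ M) ↔ IsNilpotent M := IsNilpotent.map_iff φ.injective
  have h2 : (φ M).rank = M.rank := by
    rw [Matrix.rank, hφ, Matrix.rank, LinearMap.range_comp_of_range_eq_top _ g.symm.range,
      LinearMap.range_comp]
    exact LinearEquiv.finrank_map_eq g _
  have h3 : (φ M).mulVec w = 0 ↔ M.mulVec v = 0 := by
    rw [← Matrix.mulVecLin_apply, hφ, ← hg]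
    simp
  change _ ↔ (IsNilpotent (φ M) ∧ (φ M).rank = r) ∧ (φ M).mulVec w = 0
  rw [h1, h2, h3]

/-- The pairs `(M, v)` with `M` nilpotent of rank `r`, `v ≠ 0` and `M v = 0`, counted by `M` on the
left and by `v` on the right. -/
lemma double_count {v₀ : ι → F} (h₀ : v₀ ≠ 0) (r : ℕ) :
    ((Fintype.card F : ℚ) ^ (Fintype.card ι - r) - 1) * nilCount F ι r =
      ((Fintype.card F : ℚ) ^ Fintype.card ι - 1) *
      Nat.card {M : Matrix ι ι F // (IsNilpotent M ∧ M.rank = r) ∧ M.mulVec v₀ = 0} := by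
  classical
  let e : (Σ M : {M : Matrix ι ι F // IsNilpotent M ∧ M.rank = r},
        {v : ι → F // v ≠ 0 ∧ M.1.mulVec v = 0}) ≃
      Σ v : {v : ι → F // v ≠ 0},
        {M : Matrix ι ι F // (IsNilpotent M ∧ M.rank = r) ∧ M.mulVec v = 0} :=
    { toFun := fun p => ⟨⟨p.2.1, p.2.2.1⟩, ⟨p.1.1, p.1.2, p.2.2.2⟩⟩
      invFun := fun p => ⟨⟨p.2.1, p.2.2.1⟩, ⟨p.1.1, p.1.2, p.2.2.2⟩⟩
      left_inv := fun _ => rfl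
      right_inv := fun _ => rfl }
  have h := congrArg (Nat.cast : ℕ → ℚ) (Nat.card_congr e)
  rw [Nat.card_sigma, Nat.card_sigma] at h
  -- The kernel of the zero matrix is everything, which gives the number of nonzero vectors.
  have hv := card_kernel_ne_zero (0 : Matrix ι ι F)
  simp only [Matrix.zero_mulVec, and_true, Matrix.rank_zero, tsub_zero] at hv
  push_cast at h
  simp only [card_kernel_ne_zero] at h
  rw [Finset.sum_congr rfl (fun M _ => by rw [M.2.2]),
    Finset.sum_congr (s₁ := (univ : Finset {v : ι → F // v ≠ 0})) rfl
      (fun v _ => by rw [card_kills_eq v.2 h₀])] at h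
  simp only [Finset.sum_const, Finset.card_univ, nsmul_eq_mul, ← Nat.card_eq_fintype_card] at h hv ⊢
  rw [hv] at h
  rw [nilCount, ← h, mul_comm]

/-! ### Matrices whose first column vanishes -/

/-- The block matrix `[0, a; 0, M]`: the matrix `M` with the row `a` added on top and a zero column
added on the left. -/
def border (a : ι → F) (M : Matrix ι ι F) : Matrix (Unit ⊕ ι) (Unit ⊕ ι) F :=
  Matrix.fromBlocks 0 (Matrix.replicateRow Unit a) 0 M

omit [Fintype F] in
lemma isNilpotent_border_iff (a : ι → F) (M : Matrix ι ι F) :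
    IsNilpotent (border a M) ↔ IsNilpotent M := by
  have hp (k : ℕ) : border a M ^ (k + 1) =
      Matrix.fromBlocks 0 (Matrix.replicateRow Unit a * M ^ k) 0 (M ^ (k + 1)) := by
    induction k with
    | zero => simp [border]
    | succ k ih =>
      rw [pow_succ, ih, border, Matrix.fromBlocks_multiply]
      simp [pow_succ, Matrix.mul_assoc]
  constructor
  · rintro ⟨k, hk⟩
    refine ⟨k + 1, ?_⟩
    have := hp k
    rw [pow_succ, hk, zero_mul] at this
    exact (congrArg Matrix.toBlocks₂₂ this).symm
  · rintro ⟨k, hk⟩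
    refine ⟨k + 1, ?_⟩
    rw [hp, pow_succ, hk]
    simp

omit [Fintype F] [DecidableEq ι] in
lemma rank_border_eq_finrank (a : ι → F) (M : Matrix ι ι F) :
    (border a M).rank =
      Module.finrank F (Submodule.span F (Set.range M.row) ⊔ Submodule.span F {a} :
        Submodule F (ι → F)) := by
  -- The rows of the bordered matrix are `a` and the rows of `M`, each extended by zero.
  let f : (ι → F) →ₗ[F] (Unit ⊕ ι → F) :=
    { toFun := fun v => Sum.elim 0 v
      map_add' := fun u v => by ext (i | i) <;> simp
      map_smul' := fun c v => by ext (i | i) <;> simp }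
  have hf : Function.Injective f := fun u v h => by
    ext i; exact congrFun h (Sum.inr i)
  have hr : Set.range (border a M).row = f '' (Set.range M.row ∪ {a}) := by
    ext v
    constructor
    · rintro ⟨i | i, rfl⟩
      · refine ⟨a, Or.inr rfl, ?_⟩
        ext (j | j) <;> rfl
      · refine ⟨M.row i, Or.inl ⟨i, rfl⟩, ?_⟩
        ext (j | j) <;> rfl
    · rintro ⟨_, ⟨i, rfl⟩ | rfl, rfl⟩
      · refine ⟨Sum.inr i, ?_⟩
        ext (j | j) <;> rfl
      · refine ⟨Sum.inl (), ?_⟩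
        ext (j | j) <;> rfl
  rw [Matrix.rank_eq_finrank_span_row, hr, ← Submodule.map_span, Submodule.span_union]
  exact (Submodule.equivMapOfInjective f hf _).finrank_eq.symm

omit [Fintype F] [DecidableEq ι] in
lemma rank_border_of_mem {a : ι → F} {M : Matrix ι ι F}
    (h : a ∈ Submodule.span F (Set.range M.row)) : (border a M).rank = M.rank := by
  rw [rank_border_eq_finrank, Matrix.rank_eq_finrank_span_row, sup_eq_left.mpr]
  simpa using h

omit [Fintype F] [DecidableEq ι] in
lemma rank_border_of_notMem {a : ι → F} {M : Matrix ι ι F}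
    (h : a ∉ Submodule.span F (Set.range M.row)) : (border a M).rank = M.rank + 1 := by
  rw [rank_border_eq_finrank, Matrix.rank_eq_finrank_span_row,
    Submodule.finrank_sup_span_singleton h]

/-- The number of rows `a` for which bordering `M` by `a` gives rank `r + 1`: the vectors of the row
space if `M` already has rank `r + 1`, those outside of it if `M` has rank `r`. -/
lemma card_border (M : Matrix ι ι F) (r : ℕ) :
    (Nat.card {a : ι → F // (border a M).rank = r + 1} : ℚ) =
      (if M.rank = r + 1 then (Fintype.card F : ℚ) ^ (r + 1) else 0) +
      (if M.rank = r then (Fintype.card F : ℚ) ^ Fintype.card ι - (Fintype.card F : ℚ) ^ r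
        else 0) := by
  classical
  set S := Submodule.span F (Set.range M.row)
  have hS : Nat.card {a : ι → F // a ∈ S} = Fintype.card F ^ M.rank := by
    rw [Matrix.rank_eq_finrank_span_row, ← Nat.card_eq_fintype_card]
    exact Module.natCard_eq_pow_finrank
  have hS' := Nat.card_congr (Equiv.sumCompl (fun a : ι → F => a ∈ S))
  rw [Nat.card_sum, hS, Module.natCard_eq_pow_finrank (K := F) (V := ι → F),
    Module.finrank_fintype_fun_eq_card, Nat.card_eq_fintype_card (α := F)] at hS'
  by_cases h1 : M.rank = r + 1
  · have : ∀ a, (border a M).rank = r + 1 ↔ a ∈ S := fun a => by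
      by_cases ha : a ∈ S
      · simp [ha, rank_border_of_mem ha, h1]
      · simp [ha, rank_border_of_notMem ha, h1]
    rw [Nat.card_congr (Equiv.subtypeEquivRight this), hS]
    simp [h1]
  · by_cases h2 : M.rank = r
    · have : ∀ a, (border a M).rank = r + 1 ↔ a ∉ S := fun a => by
        by_cases ha : a ∈ S
        · simp [ha, rank_border_of_mem ha, h2]
        · simp [ha, rank_border_of_notMem ha, h2]
      rw [Nat.card_congr (Equiv.subtypeEquivRight this), ← Nat.cast_pow (n := Fintype.card ι),
        ← hS']
      simp [h2]
    · have : ∀ a, (border a M).rank ≠ r + 1 := fun a => by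
        by_cases ha : a ∈ S
        · simp [rank_border_of_mem ha, h1]
        · simp [rank_border_of_notMem ha, h2]
      simp [this, h1, h2]

omit [Fintype F] in
lemma eq_border {N : Matrix (Unit ⊕ ι) (Unit ⊕ ι) F}
    (h : N.mulVec (Pi.single (Sum.inl ()) 1) = 0) :
    border (fun j => N (Sum.inl ()) (Sum.inr j)) N.toBlocks₂₂ = N := by
  rw [Matrix.mulVec_single_one] at h
  ext (i | i) (j | j)
  · exact (congrFun h (Sum.inl i)).symm
  · rfl
  · exact (congrFun h (Sum.inr i)).symm
  · rfl

/-- The nilpotent matrices of rank `r + 1` with vanishing first column, sorted by their lower right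
block. -/
lemma card_kills_single (r : ℕ) :
    (Nat.card {N : Matrix (Unit ⊕ ι) (Unit ⊕ ι) F //
      (IsNilpotent N ∧ N.rank = r + 1) ∧ N.mulVec (Pi.single (Sum.inl ()) 1) = 0} : ℚ) =
    (Fintype.card F : ℚ) ^ (r + 1) * nilCount F ι (r + 1) +
      ((Fintype.card F : ℚ) ^ Fintype.card ι - (Fintype.card F : ℚ) ^ r) * nilCount F ι r := by
  classical
  let e : {N : Matrix (Unit ⊕ ι) (Unit ⊕ ι) F //
      (IsNilpotent N ∧ N.rank = r + 1) ∧ N.mulVec (Pi.single (Sum.inl ()) 1) = 0} ≃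
      Σ M : {M : Matrix ι ι F // IsNilpotent M}, {a : ι → F // (border a M.1).rank = r + 1} :=
    { toFun := fun N =>
        ⟨⟨N.1.toBlocks₂₂, (isNilpotent_border_iff (fun j => N.1 (Sum.inl ()) (Sum.inr j)) _).mp
            (by rw [eq_border N.2.2]; exact N.2.1.1)⟩,
          ⟨fun j => N.1 (Sum.inl ()) (Sum.inr j), by rw [eq_border N.2.2]; exact N.2.1.2⟩⟩
      invFun := fun p => ⟨border p.2.1 p.1.1,
        ⟨(isNilpotent_border_iff _ _).mpr p.1.2, p.2.2⟩, by
          rw [Matrix.mulVec_single_one]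
          ext (i | i) <;> rfl⟩
      left_inv := fun N => Subtype.ext (eq_border N.2.2)
      right_inv := fun _ => rfl }
  have hc (s : ℕ) : (nilCount F ι s : ℚ) =
      ∑ M : {M : Matrix ι ι F // IsNilpotent M}, if M.1.rank = s then 1 else 0 := by
    rw [Finset.sum_boole, nilCount, ← Fintype.card_subtype, ← Nat.card_eq_fintype_card,
      Nat.card_congr (Equiv.subtypeSubtypeEquivSubtypeInter _ fun M : Matrix ι ι F => M.rank = s)]
  rw [Nat.card_congr e, Nat.card_sigma, hc, hc, Finset.mul_sum, Finset.mul_sum,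
    ← Finset.sum_add_distrib, Nat.cast_sum]
  refine Finset.sum_congr rfl fun M _ => ?_
  rw [card_border]
  simp

lemma nilCount_recursion (r : ℕ) :
    ((Fintype.card F : ℚ) ^ (Fintype.card ι - r) - 1) * nilCount F (Unit ⊕ ι) (r + 1) =
      ((Fintype.card F : ℚ) ^ (Fintype.card ι + 1) - 1) *
      ((Fintype.card F : ℚ) ^ (r + 1) * nilCount F ι (r + 1) +
      ((Fintype.card F : ℚ) ^ Fintype.card ι - (Fintype.card F : ℚ) ^ r) * nilCount F ι r) := by
  have h0 : (Pi.single (Sum.inl ()) 1 : Unit ⊕ ι → F) ≠ 0 := by simp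
  have h := double_count h0 (r + 1)
  rw [card_kills_single, Fintype.card_sum, Fintype.card_unit, add_comm 1,
    Nat.add_sub_add_right] at h
  exact h

end

/-! ### Gaussian binomials and the closed formula -/

lemma qbinom_eq_zero (n d : ℕ) : qbinom n (n + d + 1) = 0 := by
  induction n generalizing d with
  | zero => rw [qbinom]
  | succ n ih =>
    rw [qbinom, show n + 1 + d = n + d + 1 by ring, ih,
      show n + d + 1 + 1 = n + (d + 1) + 1 by ring, ih]
    simp

lemma qbinom_self (n : ℕ) : qbinom n n = 1 := by
  induction n with
  | zero => rw [qbinom]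
  | succ n ih => rw [qbinom, ih, qbinom_eq_zero n 0]; simp

lemma qbinom_zero (n : ℕ) : qbinom n 0 = 1 := by cases n <;> rw [qbinom]

lemma qbinom_succ (n k : ℕ) :
    qbinom (n + 1) (k + 1) = qbinom n k + X ^ (k + 1) * qbinom n (k + 1) := by
  rw [qbinom]

/-- The companion of the defining Pascal rule, with `n = r + k`: here the power of `q` is attached
to the other summand. -/
lemma qbinom_pascal (r k : ℕ) :
    qbinom (r + k + 1) (k + 1) = X ^ r * qbinom (r + k) k + qbinom (r + k) (k + 1) := by
  induction hs : r + k generalizing r k with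
  | zero =>
    obtain ⟨rfl, rfl⟩ : r = 0 ∧ k = 0 := by omega
    simp [qbinom]
  | succ s ih =>
    rcases r with _ | r
    · obtain rfl : k = s + 1 := by omega
      rw [qbinom_self, qbinom_self, qbinom_eq_zero _ 0]; simp
    rcases k with _ | k
    · have h := ih r 0 (by omega)
      obtain rfl : s = r := by omega
      rw [zero_add] at h ⊢
      have h1 := qbinom_succ (s + 1) 0
      have h2 := qbinom_succ s 0
      simp only [qbinom_zero, zero_add, pow_one, mul_one] at h h1 h2 ⊢
      linear_combination h1 + X * h - h2
    · have h1 := ih (r + 1) k (by omega)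
      have h2 := ih r (k + 1) (by omega)
      linear_combination qbinom_succ (s + 1) (k + 1) + h1 + X ^ (k + 1 + 1) * h2
        - X ^ (r + 1) * qbinom_succ s k
        - qbinom_succ s (k + 1)

/-- The closed formula with the rank `r` and `k` as free parameters, so that the size is
`r + k + 1` and no truncated subtraction occurs. -/
lemma nilCount_formula (F : Type) [Field F] [Fintype F] (r k : ℕ) :
    (nilCount F (Fin (r + k + 1)) r : ℚ) =
      (Fintype.card F : ℚ) ^ Nat.choose r 2 * ((Fintype.card F : ℚ) - 1) ^ r *
          (∏ j ∈ Finset.Icc 1 (r + k + 1), ∑ i ∈ Finset.range j, (Fintype.card F : ℚ) ^ i) /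
          (∏ j ∈ Finset.Icc 1 (k + 1), ∑ i ∈ Finset.range j, (Fintype.card F : ℚ) ^ i) *
          Polynomial.aeval (Fintype.card F : ℚ) (qbinom (r + k) k) := by
  have hq1 : (1 : ℚ) < Fintype.card F := by exact_mod_cast Fintype.one_lt_card
  -- `P n` is the `q`-factorial of `n`, kept opaque so that only `hP1` and `hP0` are used.
  obtain ⟨P, hPdef⟩ : ∃ P : ℕ → ℚ, ∀ n, P n =
    ∏ j ∈ Finset.Icc 1 n, ∑ i ∈ Finset.range j, (Fintype.card F : ℚ) ^ i := ⟨_, fun _ => rfl⟩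
  have hP1 (n : ℕ) : ((Fintype.card F : ℚ) - 1) * P (n + 1) =
      P n * ((Fintype.card F : ℚ) ^ (n + 1) - 1) := by
    rw [hPdef, hPdef, Finset.prod_Icc_succ_top (by omega), ← geom_sum_mul]
    ring
  have hP0 (n : ℕ) : P n ≠ 0 := by
    rw [hPdef, Finset.prod_ne_zero_iff]
    intro j hj
    have hj1 : 1 ≤ j := (Finset.mem_Icc.mp hj).1
    exact (geom_sum_pos (by linarith) (by omega)).ne'
  rw [← hPdef, ← hPdef]
  induction hs : r + k generalizing r k with
  | zero =>
    obtain ⟨rfl, rfl⟩ : r = 0 ∧ k = 0 := by omega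
    rw [nilCount_zero, qbinom_self]
    simp [hP0]
  | succ s ih =>
    rcases r with _ | r
    · obtain rfl : k = s + 1 := by omega
      rw [nilCount_zero, qbinom_self]
      simp [hP0]
    obtain rfl : s = r + k := by omega
    have hrec := nilCount_recursion (F := F) (ι := Fin (r + k + 1)) r
    rw [nilCount_congr (Fintype.equivFinOfCardEq (n := r + k + 1 + 1) (by simp [add_comm])),
      Fintype.card_fin, ih r k rfl, show r + k + 1 - r = k + 1 by omega] at hrec
    have hk0 : (Fintype.card F : ℚ) ^ (k + 1) - 1 ≠ 0 :=
      (sub_pos.mpr (one_lt_pow₀ hq1 (by omega))).ne'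
    have hq0 : (Fintype.card F : ℚ) - 1 ≠ 0 := (sub_pos.mpr hq1).ne'
    have hchoose : Nat.choose (r + 1) 2 = r + Nat.choose r 2 := by
      rw [Nat.choose_succ_succ' r 1, Nat.choose_one_right]
    have hlast := hP1 (r + k + 1)
    rw [hchoose]
    apply mul_left_cancel₀ hk0
    rw [hrec]
    have hlast' : P (r + k + 1 + 1) = P (r + k + 1) *
        ((Fintype.card F : ℚ) ^ (r + k + 1 + 1) - 1) / ((Fintype.card F : ℚ) - 1) := by
      rw [← hlast]; field_simp
    rcases k with _ | k
    · -- A full-rank matrix is not nilpotent, so only one term of the recursion survives.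
      have hfull : nilCount F (Fin (r + 0 + 1)) (r + 1) = 0 := by
        simpa using nilCount_card (F := F) (ι := Fin (r + 1))
      have h1 := hP0 (0 + 1)
      rw [hfull, qbinom_zero, qbinom_zero, hlast']
      simp only [map_one]
      field_simp
      push_cast
      ring
    · have hprev := ih (r + 1) k (by omega)
      rw [hchoose] at hprev
      have hden : P (k + 1 + 1) = P (k + 1) *
          ((Fintype.card F : ℚ) ^ (k + 1 + 1) - 1) / ((Fintype.card F : ℚ) - 1) := by
        rw [← hP1]; field_simp
      have h1 := hP0 (k + 1)
      have hpas := qbinom_pascal (r + 1) k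
      rw [show r + 1 + k + 1 = r + (k + 1) + 1 by ring,
        show r + 1 + k = r + (k + 1) by ring] at hpas
      rw [hprev, hpas, hlast', hden]
      simp only [map_add, map_mul, map_pow, aeval_X]
      field_simp
      ring

/-- The number of nilpotent `n × n` matrices over a finite field `F` with `q` elements
of rank `n − k − 1` equals
`q^binom(n−k−1,2) (q−1)^{n−k−1} [n]!_q / [k+1]!_q · [n−1 choose k]_q`. -/
theorem stmt_10 (n k : ℕ) (hn : 0 < n) (hk : k ≤ n - 1)
    (F : Type) [Field F] [Fintype F] :
    (fun q : ℚ =>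
      (Nat.card {M : Matrix (Fin n) (Fin n) F // M ^ n = 0 ∧ M.rank = n - k - 1} : ℚ) =
        q ^ Nat.choose (n - k - 1) 2 * (q - 1) ^ (n - k - 1) *
          (∏ j ∈ Finset.Icc 1 n, ∑ i ∈ Finset.range j, q ^ i) /
          (∏ j ∈ Finset.Icc 1 (k + 1), ∑ i ∈ Finset.range j, q ^ i) *
          Polynomial.aeval q (qbinom (n - 1) k))
      (Fintype.card F : ℚ) := by
  obtain ⟨r, rfl⟩ : ∃ r, n = r + k + 1 := ⟨n - k - 1, by omega⟩
  have hr : r + k + 1 - k - 1 = r := by omega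
  have h := nilCount_formula F r k
  simp only [nilCount, matrix_isNilpotent_iff, Fintype.card_fin] at h
  simp only [hr, Nat.add_sub_cancel]
  exact h
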